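/- arXiv:2605.18316 — 4 statements merged into one kernel-verified Lean document; each statement's English description precedes it below -/
import Mathlib

section
/- Let Y be a p×r real matrix of full column rank (det(YᵀY) ≠ 0) and let D be a p×p diagonal positive definite matrix. Fix an ambient vector Z = (Z₁, Z₂) with Z₁ ∈ ℝ^{p×r} and Z₂ ∈ ℝ^{p×p} symmetric. Let Ω be the unique skew-symmetric solution of Ω(YᵀY) + (YᵀY)Ω = YᵀZ₁ − Z₁ᵀY, and set ζ_Y := Z₁ − YΩ and ζ_D := ddiag(Z₂). Then: (i) Yᵀζ_Y = ζ_Yᵀ Y and ζ_D is diagonal (so (ζ_Y, ζ_D) is horizontal); (ii) the residual (Z₁ − ζ_Y, Z₂ − ζ_D) = (YΩ, Z₂ − ddiag(Z₂)) is orthogonal to every horizontal pair (η_Y, η_D) (i.e., every pair with Yᵀη_Y = η_Yᵀ Y and η_D diagonal) with respect to the inner product ⟨(ξ_Y,ξ_D),(ζ_Y,ζ_D)⟩ := tr(ξ_Yᵀ ζ_Y) + tr(D⁻¹ ξ_D D⁻¹ ζ_D). Hence (ζ_Y, ζ_D) is the orthogonal projection of Z onto the horizontal space. -/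
/-!
Horizontality of `Z₁ - Y * Ω` is the Lyapunov equation for `Ω` rearranged using `Ωᵀ = -Ω`.
Orthogonality splits over the two summands of the metric. In the `Y` part the residual contributes
`-tr (Ω * (Yᵀ * ηY))`, the trace of a skew-symmetric times a symmetric matrix, which vanishes.
In the `D` part the residual has zero diagonal, and multiplying it by diagonal matrices keeps the
diagonal zero, so the trace vanishes.
-/

open Matrix BigOperators
open scoped Classical

/-- `ddiag A` zeroes out all off-diagonal entries of `A`. -/
def ddiag {n : Type*} [DecidableEq n] (A : Matrix n n ℝ) : Matrix n n ℝ :=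
  Matrix.diagonal (fun i => A i i)

theorem trace_skew_mul_symm {n : Type*} [Fintype n] (A S : Matrix n n ℝ)
    (hA : Aᵀ = -A) (hS : Sᵀ = S) : (A * S).trace = 0 := by
  have h : (A * S).trace = -(A * S).trace := by
    conv_lhs => rw [← trace_transpose, transpose_mul, hA, hS, mul_neg, trace_neg, trace_mul_comm]
  linarith

/-- Horizontal projection on the parameter manifold `𝓑^{p,r}`: with `Ω` the unique
skew-symmetric solution of `Ω(YᵀY) + (YᵀY)Ω = YᵀZ₁ − Z₁ᵀY`, the pair
`(ζ_Y, ζ_D) = (Z₁ - Y*Ω, ddiag Z₂)` is horizontal and the residual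
`(Z₁ - ζ_Y, Z₂ - ζ_D)` is orthogonal to every horizontal pair with respect to the metric
`⟨(ξ_Y,ξ_D),(ζ_Y,ζ_D)⟩ = tr(ξ_Yᵀ ζ_Y) + tr(D⁻¹ ξ_D D⁻¹ ζ_D)`. -/
theorem horizontal_projection {p r : ℕ}
    (Y : Matrix (Fin p) (Fin r) ℝ) (hY : (Yᵀ * Y).det ≠ 0)
    (d : Fin p → ℝ) (hd : ∀ i, 0 < d i)
    (Z₁ : Matrix (Fin p) (Fin r) ℝ) (Z₂ : Matrix (Fin p) (Fin p) ℝ) (hZ₂ : Z₂.IsSymm)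
    (Ω : Matrix (Fin r) (Fin r) ℝ) (hΩskew : Ωᵀ = -Ω)
    (hΩ : Ω * (Yᵀ * Y) + (Yᵀ * Y) * Ω = Yᵀ * Z₁ - Z₁ᵀ * Y) :
    (Yᵀ * (Z₁ - Y * Ω) = (Z₁ - Y * Ω)ᵀ * Y ∧ (ddiag Z₂).IsDiag) ∧
    ∀ (ηY : Matrix (Fin p) (Fin r) ℝ) (ηD : Matrix (Fin p) (Fin p) ℝ),
      Yᵀ * ηY = ηYᵀ * Y → ηD.IsDiag →
      ((Z₁ - (Z₁ - Y * Ω))ᵀ * ηY).trace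
        + ((Matrix.diagonal d)⁻¹ * (Z₂ - ddiag Z₂) * (Matrix.diagonal d)⁻¹ * ηD).trace
        = 0 := by
  refine ⟨⟨?_, isDiag_diagonal _⟩, ?_⟩
  · rw [transpose_sub, transpose_mul, hΩskew, Matrix.mul_sub, Matrix.sub_mul, Matrix.neg_mul,
      Matrix.neg_mul, sub_neg_eq_add, ← Matrix.mul_assoc, Matrix.mul_assoc Ω,
      sub_eq_iff_eq_add, add_assoc, hΩ]
    abel
  · intro ηY ηD hηY hηD
    have hsymm : (Yᵀ * ηY)ᵀ = Yᵀ * ηY := by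
      rw [transpose_mul, transpose_transpose, hηY]
    have h₁ : ((Z₁ - (Z₁ - Y * Ω))ᵀ * ηY).trace = 0 := by
      rw [sub_sub_cancel, transpose_mul, hΩskew, Matrix.neg_mul, Matrix.neg_mul, trace_neg,
        Matrix.mul_assoc, trace_skew_mul_symm Ω _ hΩskew hsymm, neg_zero]
    have h₂ : ((Matrix.diagonal d)⁻¹ * (Z₂ - ddiag Z₂) * (Matrix.diagonal d)⁻¹ * ηD).trace
        = 0 := by
      rw [← hηD.diagonal_diag, inv_diagonal]
      refine Finset.sum_eq_zero fun i _ => ?_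
      simp [ddiag, mul_diagonal, diagonal_mul]
    rw [h₁, h₂, add_zero]
end

section
/- Let Q be an r×r real symmetric positive definite matrix with smallest eigenvalue λ_min(Q) > 0, let R be an r×r real skew-symmetric matrix, and let Ω be the unique skew-symmetric solution of ΩQ + QΩ = R. Then ‖Ω‖_F ≤ ‖R‖_F / (2 λ_min(Q)), where ‖·‖_F denotes the Frobenius norm. -/
/-!
The Frobenius inner product of `Ω` with `R = Ω Q + Q Ω` is
`tr (Ω Q Ωᵀ) + tr (Ωᵀ Q Ω)`. Since `Q - λ_min I` is positive semidefinite
(`posSemidef_sub_smul_one`), each of the two traces is at least `λ_min ‖Ω‖_F²`, so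
`2 λ_min ‖Ω‖_F² ≤ ⟨Ω, R⟩ ≤ ‖Ω‖_F ‖R‖_F` by Cauchy–Schwarz.
-/

open Matrix BigOperators
open scoped Classical

/-- Frobenius norm of a real matrix. -/
noncomputable def frobNorm {n m : Type*} [Fintype n] [Fintype m] (A : Matrix n m ℝ) : ℝ :=
  Real.sqrt (∑ i, ∑ j, (A i j) ^ 2)

/-- The Frobenius inner product written as a trace. -/
lemma trace_transpose_mul_eq_sum {r : ℕ} (A B : Matrix (Fin r) (Fin r) ℝ) :
    (Aᵀ * B).trace = ∑ p : Fin r × Fin r, A p.1 p.2 * B p.1 p.2 := by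
  rw [Fintype.sum_prod_type, Finset.sum_comm]
  simp [Matrix.trace, Matrix.mul_apply]

lemma frobNorm_eq_sqrt_sum_prod {r : ℕ} (A : Matrix (Fin r) (Fin r) ℝ) :
    frobNorm A = Real.sqrt (∑ p : Fin r × Fin r, A p.1 p.2 ^ 2) := by
  rw [frobNorm, Fintype.sum_prod_type]

lemma frobNorm_sq_eq_trace {r : ℕ} (A : Matrix (Fin r) (Fin r) ℝ) :
    frobNorm A ^ 2 = (Aᵀ * A).trace := by
  rw [frobNorm_eq_sqrt_sum_prod, Real.sq_sqrt (Finset.sum_nonneg fun _ _ => sq_nonneg _),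
    trace_transpose_mul_eq_sum]
  simp only [pow_two]

/-- Cauchy–Schwarz for the Frobenius inner product. -/
lemma trace_transpose_mul_le_frobNorm_mul {r : ℕ} (A B : Matrix (Fin r) (Fin r) ℝ) :
    (Aᵀ * B).trace ≤ frobNorm A * frobNorm B := by
  rw [trace_transpose_mul_eq_sum, frobNorm_eq_sqrt_sum_prod, frobNorm_eq_sqrt_sum_prod]
  exact Real.sum_mul_le_sqrt_mul_sqrt _ _ _

/-- Diagonalizing, `Q - l • 1 = U (D - l • 1) U*` with `D - l • 1` a nonnegative diagonal. -/
lemma posSemidef_sub_smul_one {r : ℕ} {Q : Matrix (Fin r) (Fin r) ℝ} (hQ : Q.IsHermitian)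
    {l : ℝ} (hl : ∀ i, l ≤ hQ.eigenvalues i) : (Q - l • (1 : Matrix _ _ ℝ)).PosSemidef := by
  have hD : (diagonal fun i => hQ.eigenvalues i - l).PosSemidef :=
    PosSemidef.diagonal fun i => sub_nonneg.2 (hl i)
  have h := hD.mul_mul_conjTranspose_same (hQ.eigenvectorUnitary : Matrix (Fin r) (Fin r) ℝ)
  convert h using 1
  have hU : (hQ.eigenvectorUnitary : Matrix (Fin r) (Fin r) ℝ) *
      (hQ.eigenvectorUnitary : Matrix (Fin r) (Fin r) ℝ)ᴴ = 1 :=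
    Unitary.mul_star_self_of_mem hQ.eigenvectorUnitary.2
  have hs : Q = (hQ.eigenvectorUnitary : Matrix (Fin r) (Fin r) ℝ) *
      diagonal hQ.eigenvalues * (hQ.eigenvectorUnitary : Matrix (Fin r) (Fin r) ℝ)ᴴ :=
    hQ.spectral_theorem
  have hd : (diagonal fun i => hQ.eigenvalues i - l) =
      diagonal hQ.eigenvalues - l • (1 : Matrix (Fin r) (Fin r) ℝ) := by
    rw [smul_one_eq_diagonal, diagonal_sub]
  rw [hd, mul_sub, sub_mul, ← hs, mul_smul_comm, mul_one, smul_mul_assoc, hU]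

/-- Frobenius-norm bound for the skew-symmetric solution of the Sylvester equation
`Ω Q + Q Ω = R` with `Q` symmetric positive definite:
`‖Ω‖_F ≤ ‖R‖_F / (2 λ_min(Q))`. -/
theorem sylvester_solution_frobenius_bound {r : ℕ}
    (Q R Ω : Matrix (Fin r) (Fin r) ℝ) (hQ : Q.PosDef)
    (lmin : ℝ) (hpos : 0 < lmin)
    (hlmin : IsLeast (Set.range hQ.isHermitian.eigenvalues) lmin)
    (hR : Rᵀ = -R) (hΩ : Ωᵀ = -Ω) (heq : Ω * Q + Q * Ω = R) :
    frobNorm Ω ≤ frobNorm R / (2 * lmin) := by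
  have hP := posSemidef_sub_smul_one hQ.isHermitian fun i => hlmin.2 ⟨i, rfl⟩
  have h1 := (hP.mul_mul_conjTranspose_same Ω).trace_nonneg
  have h2 := (hP.conjTranspose_mul_mul_same Ω).trace_nonneg
  rw [conjTranspose_eq_transpose_of_trivial, mul_sub, sub_mul, trace_sub, mul_smul_comm,
    mul_one, smul_mul_assoc, trace_smul, smul_eq_mul, trace_mul_comm Ω Ωᵀ,
    trace_mul_comm (Ω * Q), ← frobNorm_sq_eq_trace] at h1
  rw [conjTranspose_eq_transpose_of_trivial, mul_sub, sub_mul, trace_sub, mul_smul_comm,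
    mul_one, smul_mul_assoc, trace_smul, smul_eq_mul, mul_assoc,
    ← frobNorm_sq_eq_trace] at h2
  have h3 := trace_transpose_mul_le_frobNorm_mul Ω R
  rw [← heq, mul_add, trace_add, heq] at h3
  have hΩ0 : 0 ≤ frobNorm Ω := Real.sqrt_nonneg _
  have hR0 : 0 ≤ frobNorm R := Real.sqrt_nonneg _
  rw [le_div_iff₀ (by positivity)]
  rcases hΩ0.eq_or_lt with h0 | h0
  · rw [← h0, zero_mul]
    exact hR0
  · refine le_of_mul_le_mul_left ?_ h0
    linarith
end

section
/- Let G be a p×p real symmetric matrix, Y ∈ ℝ^{p×r}, and D a p×p diagonal positive definite matrix. Define the pair γ := (2GY, D·ddiag(G)·D). Then: (i) for every ξ_Y ∈ ℝ^{p×r} and every diagonal ξ_D, ⟨γ, (ξ_Y, ξ_D)⟩ = tr((2GY)ᵀ ξ_Y) + tr(ddiag(G) ξ_D), where ⟨(a,b),(c,d)⟩ := tr(aᵀc) + tr(D⁻¹ b D⁻¹ d); (ii) Yᵀ(2GY) = (2GY)ᵀ Y, i.e., γ lies in the horizontal space; and (iii) for every r×r skew-symmetric Ω, ⟨γ, (YΩ,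 0)⟩ = 0, i.e., γ is orthogonal to the vertical space. -/
/-!
Since `D = diagonal d` is invertible, `D⁻¹ (D · ddiag G · D) D⁻¹ = ddiag G`, which gives the
inner product formula. Symmetry of `G` makes `Yᵀ (2GY) = 2 YᵀGY` symmetric, which is horizontality;
orthogonality to the vertical space follows because the trace of a symmetric matrix times a
skew-symmetric one vanishes.
-/

open Matrix BigOperators
open scoped Classical

/-- The Riemannian gradient pair `γ = (2GY, D · ddiag(G) · D)`: (i) its inner product with
any tangent pair `(ξ_Y, ξ_D)` (with `ξ_D` diagonal) under the metric
`⟨(a,b),(c,d)⟩ = tr(aᵀc) + tr(D⁻¹ b D⁻¹ d)` equals `tr((2GY)ᵀ ξ_Y) + tr(ddiag(G) ξ_D)`;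
(ii) `γ` lies in the horizontal space; (iii) `γ` is orthogonal to the vertical space. -/
theorem riemannian_gradient_is_horizontal {p r : ℕ}
    (G : Matrix (Fin p) (Fin p) ℝ) (hG : G.IsSymm)
    (d : Fin p → ℝ) (hd : ∀ i, 0 < d i)
    (Y : Matrix (Fin p) (Fin r) ℝ) :
    (∀ (ξY : Matrix (Fin p) (Fin r) ℝ) (ξD : Matrix (Fin p) (Fin p) ℝ), ξD.IsDiag →
        (((2 : ℝ) • (G * Y))ᵀ * ξY).trace
          + ((Matrix.diagonal d)⁻¹ * (Matrix.diagonal d * ddiag G * Matrix.diagonal d)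
              * (Matrix.diagonal d)⁻¹ * ξD).trace
          = (((2 : ℝ) • (G * Y))ᵀ * ξY).trace + (ddiag G * ξD).trace) ∧
    Yᵀ * ((2 : ℝ) • (G * Y)) = ((2 : ℝ) • (G * Y))ᵀ * Y ∧
    (∀ Ω : Matrix (Fin r) (Fin r) ℝ, Ωᵀ = -Ω →
        (((2 : ℝ) • (G * Y))ᵀ * (Y * Ω)).trace
          + ((Matrix.diagonal d)⁻¹ * (Matrix.diagonal d * ddiag G * Matrix.diagonal d)
              * (Matrix.diagonal d)⁻¹ * (0 : Matrix (Fin p) (Fin p) ℝ)).trace = 0) := by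
  have hunit : IsUnit (Matrix.diagonal d).det := by
    rw [Matrix.det_diagonal]
    exact (Finset.prod_pos fun i _ => hd i).ne'.isUnit
  have hcancel : (Matrix.diagonal d)⁻¹ * (Matrix.diagonal d * ddiag G * Matrix.diagonal d)
      * (Matrix.diagonal d)⁻¹ = ddiag G := by
    rw [Matrix.mul_assoc (Matrix.diagonal d), Matrix.nonsing_inv_mul_cancel_left _ _ hunit,
      Matrix.mul_nonsing_inv_cancel_right _ _ hunit]
  have hhor : Yᵀ * ((2 : ℝ) • (G * Y)) = ((2 : ℝ) • (G * Y))ᵀ * Y := by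
    rw [Matrix.transpose_smul, Matrix.transpose_mul, hG.eq, Matrix.mul_smul, Matrix.smul_mul,
      Matrix.mul_assoc]
  refine ⟨fun ξY ξD _ => by rw [hcancel], hhor, fun Ω hΩ => ?_⟩
  rw [Matrix.mul_zero, Matrix.trace_zero, add_zero, ← Matrix.mul_assoc]
  -- With `S = (2GY)ᵀ Y` symmetric, transposing gives `tr (S Ω) = tr (Ωᵀ S) = -tr (S Ω)`.
  have hS : (((2 : ℝ) • (G * Y))ᵀ * Y)ᵀ = ((2 : ℝ) • (G * Y))ᵀ * Y := by
    rw [Matrix.transpose_mul, Matrix.transpose_transpose, hhor]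
  have htr := Matrix.trace_transpose (((2 : ℝ) • (G * Y))ᵀ * Y * Ω)
  rw [Matrix.transpose_mul, hS, hΩ, Matrix.neg_mul, Matrix.trace_neg, Matrix.trace_mul_comm] at htr
  linarith
end

section
/- Let D be a p×p real diagonal matrix with strictly positive diagonal entries, and let ξ be any p×p real diagonal matrix. Then the matrix D + ξ + (1/2) ξ D⁻¹ ξ is symmetric positive definite. In particular, the diagonal component of the retraction Retr_{(Y,D)}(ξ_Y, ξ_D) = (Y + ξ_Y, D + ξ_D + (1/2) ξ_D D⁻¹ ξ_D) remains positive definite for every tangent step, with no step-size restriction. -/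
/-!
All matrices involved are diagonal, so positive definiteness reduces to positivity of each
diagonal entry. With `d > 0` the entry is `d + x + x² / (2 d) = ((d + x)² + d²) / (2 d)`, which is
positive for every real `x`.
-/

open Matrix BigOperators
open scoped Classical

/-- Unconditional positive definiteness of the diagonal component of the retraction:
for a diagonal matrix `D` with strictly positive diagonal entries and any diagonal `ξ`,
the matrix `D + ξ + (1/2) ξ D⁻¹ ξ` is symmetric positive definite. -/
theorem retraction_diagonal_posDef {p : ℕ}
    (d : Fin p → ℝ) (hd : ∀ i, 0 < d i)
    (ξ : Matrix (Fin p) (Fin p) ℝ) (hξ : ξ.IsDiag) :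
    (Matrix.diagonal d + ξ + (1 / 2 : ℝ) • (ξ * (Matrix.diagonal d)⁻¹ * ξ)).PosDef := by
  obtain ⟨x, rfl⟩ : ∃ x, ξ = diagonal x := ⟨ξ.diag, hξ.diagonal_diag.symm⟩
  have hinv : (diagonal d)⁻¹ = diagonal fun i => (d i)⁻¹ := by
    apply Matrix.inv_eq_right_inv
    rw [diagonal_mul_diagonal, ← diagonal_one]
    congr 1
    funext i
    exact mul_inv_cancel₀ (hd i).ne'
  rw [hinv, diagonal_mul_diagonal, diagonal_mul_diagonal, ← diagonal_smul, diagonal_add,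
    diagonal_add, posDef_diagonal_iff]
  intro i
  have hi := hd i
  -- Completing the square makes each diagonal entry a positive multiple of a sum of squares.
  have key : d i + x i + (1 / 2 : ℝ) * (x i * (d i)⁻¹ * x i)
      = ((d i + x i) ^ 2 + d i ^ 2) / (2 * d i) := by
    field_simp
    ring
  change 0 < d i + x i + (1 / 2 : ℝ) * (x i * (d i)⁻¹ * x i)
  rw [key]
  positivity
end
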